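/- arXiv:1907.03192 — 2 statements merged into one kernel-verified Lean document; each statement's English description precedes it below -/
import Mathlib

section
/- Let G = (V, E) be a finite connected graph and η a probability measure on V. For each pair of vertices x, y ∈ V let γ_{xy} be a random path in G from x to y chosen according to some probability distribution on a finite set of paths, and let Γ̃ denote the class of all paths that can occur. Let l_max(Γ̃) be the maximal number of edges of any path in Γ̃, and let b_max(Γ̃) = max_{e ∈ E} Σ_{x,y ∈ V} P(γ_{xy} contains e) be the maximal average (expected) load of an edge. Then for every function f : V → ℝ, with f̄ = Σ_{x ∈ V} f(x)·η(x), one has Σ_{x ∈ V} (f(x) − f̄)²·η(x) ≤ κ·Σ_{x,y ∈ V, x ∼ y} (f(x) − f(y))², where κ = 0.5·l_max(Γ̃)·(max_{x ∈ V} η(x)²)·b_max(Γ̃) and the sum on the right ranges over all ordered pairs of adjacent vertices. -/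
/-!
The variance is half of the double sum of `(f x - f y)² η x η y`, and each weight `η x η y` is at
most `M = max η²` (`variance_eq`, `two_mul_variance_le`).  For each admissible walk from `x` to
`y`, telescoping along its loop-erased version and Cauchy–Schwarz bound `(f x - f y)²` by the
length of the walk times the sum of `(f u - f v)²` over the oriented edges `(u, v)` whose
underlying edge lies on the walk (`sq_sub_le_length_mul`).  Averaging over the random walk, summing
over `x, y` and exchanging the sums, each oriented edge contributes with its load, which is at
most `b_max`.

Walks may repeat edges whereas the load counts an edge once per walk; loop erasure settles this,
since it only shrinks the length and the edge set.
-/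

open SimpleGraph
open scoped Classical

lemma variance_eq {V : Type*} [Fintype V] (η f : V → ℝ) (hη1 : ∑ x, η x = 1) :
    2 * ∑ x, (f x - ∑ z, f z * η z) ^ 2 * η x =
      ∑ x, ∑ y, (f x - f y) ^ 2 * (η x * η y) := by
  set m := ∑ z, f z * η z with hm
  have h1 : ∀ x, ∑ y, (f x - f y) ^ 2 * (η x * η y) =
      f x ^ 2 * η x - 2 * m * (f x * η x) + (∑ y, f y ^ 2 * η y) * η x := by
    intro x
    have : ∀ y, (f x - f y) ^ 2 * (η x * η y) =
        f x ^ 2 * η x * η y - 2 * (f x * η x) * (f y * η y) + η x * (f y ^ 2 * η y) := by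
      intro y; ring
    simp only [this, Finset.sum_add_distrib, Finset.sum_sub_distrib, ← Finset.mul_sum, hη1, ← hm]
    ring
  have h2 : ∀ x, (f x - m) ^ 2 * η x = f x ^ 2 * η x - 2 * m * (f x * η x) + m ^ 2 * η x := by
    intro x; ring
  simp only [h1, h2, Finset.sum_add_distrib, Finset.sum_sub_distrib, ← Finset.mul_sum, hη1, ← hm]
  ring

lemma two_mul_variance_le {V : Type*} [Fintype V] (η f : V → ℝ)
    (hη1 : ∑ x, η x = 1) (M : ℝ) (hM : ∀ x, η x ^ 2 ≤ M) :
    2 * ∑ x, (f x - ∑ z, f z * η z) ^ 2 * η x ≤ M * ∑ q : V × V, (f q.1 - f q.2) ^ 2 := by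
  rw [variance_eq η f hη1, Fintype.sum_prod_type, Finset.mul_sum]
  refine Finset.sum_le_sum fun x _ => ?_
  rw [Finset.mul_sum]
  refine Finset.sum_le_sum fun y _ => ?_
  rw [mul_comm]
  refine mul_le_mul_of_nonneg_right ?_ (sq_nonneg _)
  nlinarith [hM x, hM y, sq_nonneg (η x - η y)]

lemma sum_darts_sub {V : Type*} {G : SimpleGraph V} (f : V → ℝ) {x y : V} (p : G.Walk x y) :
    (p.darts.map (fun d => f d.fst - f d.snd)).sum = f x - f y := by
  induction p with
  | nil => simp
  | cons h p ih => simp [ih]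

/-- Cauchy–Schwarz along the loop-erased walk `p.bypass`. Its darts are distinct, it is no longer
than `p`, and it uses only edges of `p`, so `p` itself may repeat edges. -/
lemma sq_sub_le_length_mul {V : Type*} [Fintype V] {G : SimpleGraph V} (f : V → ℝ) {x y : V}
    (p : G.Walk x y) :
    (f x - f y) ^ 2 ≤ p.length *
      ∑ d : G.Dart, if d.edge ∈ p.edges then (f d.fst - f d.snd) ^ 2 else 0 := by
  have hnd : p.bypass.darts.Nodup := p.bypass_isPath.isTrail.edges_nodup.of_map
  have hcard : (p.bypass.darts.toFinset.card : ℝ) ≤ p.length := by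
    rw [List.toFinset_card_of_nodup hnd, Walk.length_darts]
    exact_mod_cast p.length_bypass_le_length
  rw [← sum_darts_sub f p.bypass, ← List.sum_toFinset _ hnd]
  refine sq_sum_le_card_mul_sum_sq.trans ?_
  refine mul_le_mul hcard ?_ (Finset.sum_nonneg fun _ _ => sq_nonneg _) (Nat.cast_nonneg _)
  rw [← Finset.sum_filter]
  refine Finset.sum_le_sum_of_subset_of_nonneg ?_ fun _ _ _ => sq_nonneg _
  intro d hd
  simp only [Finset.mem_filter, Finset.mem_univ, true_and]
  exact p.edges_bypass_subset_edges (List.mem_map_of_mem (List.mem_toFinset.mp hd))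

lemma sum_dart_eq {V : Type*} [Fintype V] (G : SimpleGraph V) (h : V → V → ℝ) :
    ∑ d : G.Dart, h d.fst d.snd =
      ∑ x, ∑ y ∈ Finset.univ.filter (fun y => G.Adj x y), h x y := by
  rw [Finset.sum_sigma']
  refine Finset.sum_bij' (fun d _ => ⟨d.fst, d.snd⟩)
    (fun q hq => ⟨(q.1, q.2), by simpa using hq⟩) ?_ ?_ ?_ ?_ ?_
  · intro d _; simp
  all_goals intros; first | rfl | simp

/-- general structure, randomized paths: for a finite connected graph `G`,
a probability measure `η` on the vertices, and for each pair `x, y` a random walk from `x`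
to `y` chosen according to a probability distribution `w x y` supported on a finite set
`S x y` of walks, every `f : V → ℝ` satisfies
`Σ_x (f(x) − f̄)²·η(x) ≤ κ·Σ_{x ∼ y} (f(x) − f(y))²` with
`κ = 0.5·l_max(Γ̃)·(max_x η(x)²)·b_max(Γ̃)`, where `l_max(Γ̃)` is the maximal length of a
possible path and `b_max(Γ̃) = max_e Σ_{x,y} P(γ_{xy} ∋ e)` the maximal expected load. -/
theorem stmt11 {V : Type*} [Fintype V] [DecidableEq V] (G : SimpleGraph V)
    [DecidableRel G.Adj] (hconn : G.Connected)
    (η : V → ℝ) (hη : ∀ x, 0 ≤ η x) (hη1 : ∑ x, η x = 1)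
    (S : ∀ x y : V, Finset (G.Walk x y))
    (w : ∀ x y : V, G.Walk x y → ℝ)
    (hw0 : ∀ x y p, 0 ≤ w x y p)
    (hw1 : ∀ x y, ∑ p ∈ S x y, w x y p = 1)
    (lmax : ℕ)
    (hlmax : lmax = Finset.univ.sup
      (fun q : V × V => (S q.1 q.2).sup (fun p => p.length)))
    (load : Sym2 V → ℝ)
    (hload : ∀ e, load e = ∑ q : V × V,
      ∑ p ∈ (S q.1 q.2).filter (fun p => e ∈ p.edges), w q.1 q.2 p)
    (bmax : ℝ) (hbmax : bmax = ⨆ e : {e // e ∈ G.edgeFinset}, load e)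
    (κ : ℝ) (hκ : κ = 0.5 * (lmax : ℝ) * (Finset.univ.sup'
      (Finset.univ_nonempty_iff.mpr hconn.nonempty) (fun x => (η x) ^ 2)) * bmax)
    (f : V → ℝ) :
    ∑ x, (f x - ∑ z, f z * η z) ^ 2 * η x ≤
      κ * ∑ x, ∑ y ∈ Finset.univ.filter (fun y => G.Adj x y), (f x - f y) ^ 2 := by
  set M := Finset.univ.sup' (Finset.univ_nonempty_iff.mpr hconn.nonempty) (fun x => (η x) ^ 2)
    with hMdef
  have hM : ∀ x, η x ^ 2 ≤ M := fun x =>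
    Finset.le_sup' (fun x => (η x) ^ 2) (Finset.mem_univ x)
  have hM0 : 0 ≤ M := (sq_nonneg _).trans (hM hconn.nonempty.some)
  have hlen : ∀ (x y : V), ∀ p ∈ S x y, p.length ≤ lmax := by
    intro x y p hp
    rw [hlmax]
    exact (Finset.le_sup (f := fun p : G.Walk x y => p.length) hp).trans
      (Finset.le_sup (f := fun q : V × V => (S q.1 q.2).sup (fun p => p.length))
        (Finset.mem_univ (x, y)))
  have hload_le : ∀ d : G.Dart, load d.edge ≤ bmax := by
    intro d
    rw [hbmax]
    exact le_ciSup (f := fun e : {e // e ∈ G.edgeFinset} => load e)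
      (Set.finite_range _).bddAbove ⟨d.edge, by simp⟩
  set g : G.Dart → ℝ := fun d => (f d.fst - f d.snd) ^ 2 with hg
  have hg0 : ∀ d, 0 ≤ g d := fun d => sq_nonneg _
  -- the squared difference is constant in the random walk, so it can be averaged
  have hpair : ∀ q : V × V, (f q.1 - f q.2) ^ 2 ≤ lmax * ∑ d : G.Dart,
      (∑ p ∈ (S q.1 q.2).filter (fun p => d.edge ∈ p.edges), w q.1 q.2 p) * g d := by
    intro q
    calc (f q.1 - f q.2) ^ 2
        = ∑ p ∈ S q.1 q.2, w q.1 q.2 p * (f q.1 - f q.2) ^ 2 := by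
          rw [← Finset.sum_mul, hw1, one_mul]
      _ ≤ ∑ p ∈ S q.1 q.2, w q.1 q.2 p *
            (lmax * ∑ d : G.Dart, if d.edge ∈ p.edges then g d else 0) := by
          refine Finset.sum_le_sum fun p hp => mul_le_mul_of_nonneg_left ?_ (hw0 _ _ _)
          have hl : (p.length : ℝ) ≤ lmax := Nat.cast_le.mpr (hlen _ _ p hp)
          have hp2 : (f q.1 - f q.2) ^ 2 ≤ p.length *
              ∑ d : G.Dart, if d.edge ∈ p.edges then g d else 0 := by
            convert sq_sub_le_length_mul f p
          refine hp2.trans (mul_le_mul_of_nonneg_right hl ?_)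
          exact Finset.sum_nonneg fun d _ => by split_ifs <;> simp [hg0]
      _ = _ := by
          simp only [Finset.mul_sum, Finset.sum_mul, Finset.sum_filter]
          rw [Finset.sum_comm]
          refine Finset.sum_congr rfl fun d _ => Finset.sum_congr rfl fun p _ => ?_
          split_ifs <;> ring
  have hsum : ∑ q : V × V, (f q.1 - f q.2) ^ 2 ≤ lmax * (bmax * ∑ d, g d) := by
    refine (Finset.sum_le_sum fun q _ => hpair q).trans ?_
    rw [← Finset.mul_sum, Finset.sum_comm]
    refine mul_le_mul_of_nonneg_left ?_ (Nat.cast_nonneg _)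
    rw [Finset.mul_sum]
    refine Finset.sum_le_sum fun d _ => ?_
    rw [← Finset.sum_mul]
    refine mul_le_mul_of_nonneg_right ?_ (hg0 d)
    refine le_trans (le_of_eq ?_) (hload_le d)
    rw [hload]
  have hE : ∑ d, g d = ∑ x, ∑ y ∈ Finset.univ.filter (fun y => G.Adj x y), (f x - f y) ^ 2 := by
    convert sum_dart_eq G (fun x y => (f x - f y) ^ 2)
  rw [← hE, hκ]
  have h1 := two_mul_variance_le η f hη1 M hM
  have h2 := mul_le_mul_of_nonneg_left hsum hM0
  linarith
end

section
/- Let G = (V, E) be a finite graph, η a probability measure on V, and B ⊆ V a subset with η(B) > 0 such that the induced subgraph G_B = (B, E_B), with E_B the set of edges of G having both endpoints in B, is connected. For each pair x, y ∈ B let γ_{xy} be a random path in G_B from x to y chosen according to some probability distribution on a finite set of paths in G_B, and let Γ̃_B denote the class of all paths that can occur. Let l_max(Γ̃_B) be the maximal number of edges of any path in Γ̃_B and b_max(Γ̃_B) = max_{e ∈ E_B} Σ_{x,y ∈ B} P(γ_{xy} contains e). Then for every function f : V → ℝ, with f̄_B = (Σ_{z ∈ B} η(z))^{-1}·Σ_{x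 ∈ B} f(x)·η(x), one has Σ_{x ∈ B} (f(x) − f̄_B)²·η(x) ≤ κ̃_B·Σ_{x ∈ B} Σ_{y ∈ B, y ∼ x} (f(x) − f(y))², where κ̃_B = 0.5·(Σ_{z ∈ B} η(z))^{-1}·l_max(Γ̃_B)·(max_{x ∈ B} η(x)²)·b_max(Γ̃_B). -/
open SimpleGraph
open scoped Classical

/-!
The weighted variance over `B` equals half the normalised double sum of
`(f x - f y)² η x η y` (`weighted_variance_eq`), and `η x η y ≤ max η²`.  For a walk `p` from `x`
to `y`, telescoping along the path obtained from `p` by erasing loops and applying Cauchy–Schwarz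
bounds `(f x - f y)²` by the length of `p` times the sum of the squared increments of `f` over the
edges of `p` (`sq_sub_le_walk`).  Averaging over the random walk and exchanging the order of
summation makes the load of each edge appear (`sum_sq_sub_le_load`).  The sum over edges is bounded
by the sum over ordered pairs of adjacent vertices, which is the Dirichlet form on the right.
-/

/-- The weighted variance, expressed through pairwise differences. -/
lemma weighted_variance_eq {V : Type*} (B : Finset V) (η f : V → ℝ) (h : 0 < ∑ z ∈ B, η z) :
    ∑ x ∈ B, (f x - (∑ z ∈ B, η z)⁻¹ * ∑ z ∈ B, f z * η z) ^ 2 * η x =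
      0.5 * (∑ z ∈ B, η z)⁻¹ * ∑ x ∈ B, ∑ y ∈ B, (f x - f y) ^ 2 * (η x * η y) := by
  set Z := ∑ z ∈ B, η z with hZ
  set A := ∑ z ∈ B, f z * η z with hA
  set Q := ∑ z ∈ B, f z ^ 2 * η z with hQ
  have h1 : ∀ m : ℝ, ∑ x ∈ B, (f x - m) ^ 2 * η x = Q - 2 * m * A + m ^ 2 * Z := by
    intro m
    rw [hQ, hA, hZ, Finset.mul_sum, Finset.mul_sum, ← Finset.sum_sub_distrib,
      ← Finset.sum_add_distrib]
    exact Finset.sum_congr rfl fun x _ => by ring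
  have h2 : ∑ x ∈ B, ∑ y ∈ B, (f x - f y) ^ 2 * (η x * η y) = 2 * (Q * Z - A ^ 2) := by
    have h3 : ∀ x ∈ B, ∑ y ∈ B, (f x - f y) ^ 2 * (η x * η y) =
        Q * η x - 2 * A * (f x * η x) + Z * (f x ^ 2 * η x) := by
      intro x _
      have := h1 (f x)
      calc _ = η x * ∑ y ∈ B, (f y - f x) ^ 2 * η y := by
            rw [Finset.mul_sum]
            exact Finset.sum_congr rfl fun y _ => by ring
        _ = _ := by rw [this]; ring
    rw [Finset.sum_congr rfl h3, Finset.sum_add_distrib, Finset.sum_sub_distrib,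
      ← Finset.mul_sum, ← Finset.mul_sum, ← Finset.mul_sum, ← hZ, ← hA, ← hQ]
    ring
  rw [h1, h2]
  field_simp
  ring

lemma sub_eq_sum_darts {U : Type*} {H : SimpleGraph U} (f : U → ℝ) {x y : U} (p : H.Walk x y) :
    f x - f y = (p.darts.map fun d => f d.fst - f d.snd).sum := by
  induction p with
  | nil => simp
  | cons h p ih => simp [← ih]

/-- Cauchy–Schwarz along a walk.  The right-hand side counts each ordered pair of vertices once,
however often `p` traverses the edge; this is possible because the telescoping is done along the
loop erasure `p.bypass`. -/
lemma sq_sub_le_walk {U : Type*} [Fintype U] {H : SimpleGraph U} (f : U → ℝ) {x y : U}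
    (p : H.Walk x y) :
    (f x - f y) ^ 2 ≤ (p.length : ℝ) *
      ∑ r : U × U, if s(r.1, r.2) ∈ p.edges then (f r.1 - f r.2) ^ 2 else 0 := by
  have hnd : p.bypass.darts.Nodup :=
    Walk.darts_nodup_of_support_nodup p.bypass_isPath.support_nodup
  have hcard : (p.bypass.darts.toFinset.card : ℝ) ≤ p.length := by
    rw [List.toFinset_card_of_nodup hnd, Walk.length_darts]
    exact_mod_cast p.length_bypass_le_length
  have hsum : ∑ d ∈ p.bypass.darts.toFinset, (f d.fst - f d.snd) ^ 2 ≤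
      ∑ r : U × U, if s(r.1, r.2) ∈ p.edges then (f r.1 - f r.2) ^ 2 else 0 := by
    rw [← Finset.sum_filter]
    rw [← Finset.sum_image (s := p.bypass.darts.toFinset) (g := Dart.toProd)
      (f := fun r : U × U => (f r.1 - f r.2) ^ 2) (fun a _ b _ h => Dart.ext _ _ h)]
    apply Finset.sum_le_sum_of_subset_of_nonneg
    · intro r hr
      obtain ⟨d, hd, rfl⟩ := Finset.mem_image.1 hr
      have hd' : d.edge ∈ p.bypass.edges :=
        List.mem_map_of_mem (List.mem_toFinset.1 hd)
      exact Finset.mem_filter.2 ⟨Finset.mem_univ _, p.edges_bypass_subset_edges hd'⟩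
    · intro r _ _
      positivity
  rw [sub_eq_sum_darts f p.bypass, ← List.sum_toFinset _ hnd]
  exact sq_sum_le_card_mul_sum_sq.trans
    (mul_le_mul hcard hsum (Finset.sum_nonneg fun _ _ => sq_nonneg _) (Nat.cast_nonneg _))

/-- Averaging the walk bound over the random walks bounds the double sum of squared differences by
the Dirichlet form weighted with the edge loads. -/
lemma sum_sq_sub_le_load {U : Type*} [Fintype U] {H : SimpleGraph U} (f : U → ℝ)
    (S : ∀ x y : U, Finset (H.Walk x y)) (w : ∀ x y : U, H.Walk x y → ℝ)
    (hw0 : ∀ x y p, 0 ≤ w x y p) (hw1 : ∀ x y, ∑ p ∈ S x y, w x y p = 1)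
    (L : ℕ) (hL : ∀ x y, ∀ p ∈ S x y, p.length ≤ L) :
    ∑ q : U × U, (f q.1 - f q.2) ^ 2 ≤ (L : ℝ) * ∑ r : U × U,
      (∑ q : U × U, ∑ p ∈ S q.1 q.2 with s(r.1, r.2) ∈ p.edges, w q.1 q.2 p) *
        (f r.1 - f r.2) ^ 2 := by
  calc ∑ q : U × U, (f q.1 - f q.2) ^ 2
      = ∑ q : U × U, ∑ p ∈ S q.1 q.2, w q.1 q.2 p * (f q.1 - f q.2) ^ 2 := by
        refine Finset.sum_congr rfl fun q _ => ?_
        rw [← Finset.sum_mul, hw1, one_mul]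
    _ ≤ ∑ q : U × U, ∑ p ∈ S q.1 q.2, w q.1 q.2 p * ((L : ℝ) *
          ∑ r : U × U, if s(r.1, r.2) ∈ p.edges then (f r.1 - f r.2) ^ 2 else 0) := by
        refine Finset.sum_le_sum fun q _ => Finset.sum_le_sum fun p hp => ?_
        refine mul_le_mul_of_nonneg_left ((sq_sub_le_walk f p).trans ?_) (hw0 _ _ _)
        refine mul_le_mul_of_nonneg_right (by exact_mod_cast hL _ _ p hp) ?_
        exact Finset.sum_nonneg fun r _ => by split_ifs <;> positivity
    _ = _ := by
        simp only [Finset.mul_sum, Finset.sum_mul, Finset.sum_filter]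
        conv_lhs =>
          enter [2, q]
          rw [Finset.sum_comm]
        rw [Finset.sum_comm]
        refine Finset.sum_congr rfl fun r _ => Finset.sum_congr rfl fun q _ =>
          Finset.sum_congr rfl fun p _ => ?_
        split_ifs <;> ring

/-- Poincaré-type inequality on an induced subgraph: for a finite graph
`G`, a probability measure `η` on `V`, and `B ⊆ V` with `η(B) > 0` whose induced subgraph
`G_B` is connected, given for each pair `x, y ∈ B` a random walk in `G_B` from `x` to `y`
chosen according to a probability distribution `w x y` supported on a finite set `S x y` of
walks in `G_B`, every `f : V → ℝ` satisfies
`Σ_{x∈B} (f(x) − f̄_B)²·η(x) ≤ κ̃_B·Σ_{x∈B} Σ_{y∈B, y∼x} (f(x) − f(y))²` with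
`κ̃_B = 0.5·(Σ_{z∈B} η(z))⁻¹·l_max(Γ̃_B)·(max_{x∈B} η(x)²)·b_max(Γ̃_B)`. -/
theorem stmt12 {V : Type*} [Fintype V] [DecidableEq V] (G : SimpleGraph V)
    [DecidableRel G.Adj]
    (η : V → ℝ) (hη : ∀ x, 0 ≤ η x) (hη1 : ∑ x, η x = 1)
    (B : Finset V) (hBne : B.Nonempty) (hBpos : 0 < ∑ z ∈ B, η z)
    (hconn : (G.induce (B : Set V)).Connected)
    (S : ∀ x y : ↥(B : Set V), Finset ((G.induce (B : Set V)).Walk x y))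
    (w : ∀ x y : ↥(B : Set V), (G.induce (B : Set V)).Walk x y → ℝ)
    (hw0 : ∀ x y p, 0 ≤ w x y p)
    (hw1 : ∀ x y, ∑ p ∈ S x y, w x y p = 1)
    (lmax : ℕ)
    (hlmax : lmax = Finset.univ.sup
      (fun q : ↥(B : Set V) × ↥(B : Set V) => (S q.1 q.2).sup (fun p => p.length)))
    (load : Sym2 ↥(B : Set V) → ℝ)
    (hload : ∀ e, load e = ∑ q : ↥(B : Set V) × ↥(B : Set V),
      ∑ p ∈ (S q.1 q.2).filter (fun p => e ∈ p.edges), w q.1 q.2 p)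
    (bmax : ℝ)
    (hbmax : bmax = ⨆ e : (G.induce (B : Set V)).edgeSet, load e)
    (κ : ℝ)
    (hκ : κ = 0.5 * (∑ z ∈ B, η z)⁻¹ * (lmax : ℝ) *
      (B.sup' hBne (fun x => (η x) ^ 2)) * bmax)
    (f : V → ℝ) :
    ∑ x ∈ B, (f x - (∑ z ∈ B, η z)⁻¹ * ∑ z ∈ B, f z * η z) ^ 2 * η x ≤
      κ * ∑ x ∈ B, ∑ y ∈ B.filter (fun y => G.Adj x y), (f x - f y) ^ 2 := by
  have hL : ∀ x y, ∀ p ∈ S x y, p.length ≤ lmax := by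
    intro x y p hp
    rw [hlmax]
    exact (Finset.le_sup (f := fun p => p.length) hp).trans
      (Finset.le_sup (f := fun q : ↥(B : Set V) × ↥(B : Set V) =>
        (S q.1 q.2).sup (fun p => p.length)) (Finset.mem_univ (x, y)))
  have hb : ∀ r : ↥(B : Set V) × ↥(B : Set V), load s(r.1, r.2) * (f r.1 - f r.2) ^ 2 ≤
      bmax * if G.Adj r.1 r.2 then (f r.1 - f r.2) ^ 2 else 0 := by
    intro r
    split_ifs with hr
    · refine mul_le_mul_of_nonneg_right ?_ (sq_nonneg _)
      rw [hbmax]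
      exact le_ciSup (f := fun e : (G.induce (B : Set V)).edgeSet => load e)
        (Set.finite_range _).bddAbove ⟨s(r.1, r.2), hr⟩
    · -- a pair of non-adjacent vertices lies on no walk, so its load vanishes
      have h0 : load s(r.1, r.2) = 0 := by
        rw [hload]
        refine Finset.sum_eq_zero fun q _ => Finset.sum_eq_zero fun p hp => ?_
        exact absurd (p.adj_of_mem_edges (Finset.mem_filter.1 hp).2) hr
      rw [h0, zero_mul, mul_zero]
  have hpair : ∀ g : V → V → ℝ, ∑ x ∈ B, ∑ y ∈ B, g x y =
      ∑ q : ↥(B : Set V) × ↥(B : Set V), g q.1 q.2 := by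
    intro g
    rw [Fintype.sum_prod_type, ← Finset.sum_coe_sort B]
    exact Finset.sum_congr rfl fun x _ => (Finset.sum_coe_sort B (g x)).symm
  have key : ∑ x ∈ B, ∑ y ∈ B, (f x - f y) ^ 2 ≤ (lmax : ℝ) * (bmax *
      ∑ x ∈ B, ∑ y ∈ B.filter (fun y => G.Adj x y), (f x - f y) ^ 2) := by
    simp only [Finset.sum_filter]
    rw [hpair, hpair, Finset.mul_sum]
    refine (sum_sq_sub_le_load (fun x : ↥(B : Set V) => f x) S w hw0 hw1 lmax hL).trans ?_
    refine mul_le_mul_of_nonneg_left (Finset.sum_le_sum fun r _ => ?_) (Nat.cast_nonneg _)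
    refine le_trans (le_of_eq ?_) (hb r)
    rw [hload]
    congr!
  set M := B.sup' hBne (fun x => (η x) ^ 2) with hM
  have hMle : ∀ x ∈ B, η x ^ 2 ≤ M := fun x hx => Finset.le_sup' (fun x => (η x) ^ 2) hx
  have hM0 : 0 ≤ M := by
    obtain ⟨x, hx⟩ := hBne
    exact (sq_nonneg _).trans (hMle x hx)
  have hηM : ∑ x ∈ B, ∑ y ∈ B, (f x - f y) ^ 2 * (η x * η y) ≤
      M * ∑ x ∈ B, ∑ y ∈ B, (f x - f y) ^ 2 := by
    simp only [Finset.mul_sum]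
    refine Finset.sum_le_sum fun x hx => Finset.sum_le_sum fun y hy => ?_
    rw [mul_comm]
    refine mul_le_mul_of_nonneg_right ?_ (sq_nonneg _)
    nlinarith [hMle x hx, hMle y hy, sq_nonneg (η x - η y)]
  rw [weighted_variance_eq B η f hBpos]
  calc _ ≤ 0.5 * (∑ z ∈ B, η z)⁻¹ * (M * ((lmax : ℝ) * (bmax *
        ∑ x ∈ B, ∑ y ∈ B.filter (fun y => G.Adj x y), (f x - f y) ^ 2))) :=
        mul_le_mul_of_nonneg_left (hηM.trans (mul_le_mul_of_nonneg_left key hM0)) (by positivity)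
    _ = _ := by rw [hκ]; ring
end
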